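/- Let p ≥ 1 be a natural number, let c : ℤ → ℝ satisfy c(k) = 0 for k < 0 and for k > 2p − 1, and let φ : ℝ → ℝ be differentiable on ℝ, satisfy φ(x) = 0 whenever x ≤ 0 or x ≥ 2p − 1, and satisfy the two-scale equation φ(x) = Σ_{k=0}^{2p−1} c(k)·φ(2x − k) for all x ∈ ℝ. Then for every integer j with 1 ≤ j ≤ 2p − 2, (1/2)·φ′(j) = Σ_{k=1}^{2p−2} c(2j − k)·φ′(k); that is, the vector (φ′(1), …, φ′(2p−2)) is an eigenvector with eigenvalue 1/2 of the matrix L with entries L_{jk} = c(2j − k). -/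

import Mathlib

/-!
Differentiating the refinement equation `φ x = ∑ k, c k • φ (a x - k)` at an integer `j` gives
`φ′ j = a • ∑ k, c k • φ′ (a j - k)`, and the substitution `k ↦ a j - k` moves the shift from `φ′`
to `c`. The new sum may be restricted to the integers strictly inside the support interval of `φ`:
at its endpoints, `φ` vanishes on one side only, but this already forces `φ′` to vanish there.
-/

open Finset

section Derivative

variable {𝕜 E : Type*} [NontriviallyNormedField 𝕜] [NormedAddCommGroup E] [NormedSpace 𝕜 E]

lemma deriv_eq_zero_of_eqOn_zero {f : 𝕜 → E} {s : Set 𝕜} {x : 𝕜} (hf : DifferentiableAt 𝕜 f x)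
    (hs : UniqueDiffWithinAt 𝕜 s x) (hx : x ∈ s) (hzero : Set.EqOn f 0 s) : deriv f x = 0 :=
  calc
    deriv f x = derivWithin f s x := (hf.derivWithin hs).symm
    _ = derivWithin 0 s x := derivWithin_congr hzero (hzero hx)
    _ = 0 := congrFun (derivWithin_zero s) x

lemma hasDerivAt_sum_smul_comp_mul_sub {ι R : Type*} [Semiring R] [Module R E]
    [SMulCommClass 𝕜 R E] [ContinuousConstSMul R E] {f : 𝕜 → E} {a x : 𝕜} {s : Finset ι}
    (c : ι → R) (b : ι → 𝕜) (hf : ∀ i ∈ s, DifferentiableAt 𝕜 f (a * x - b i)) :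
    HasDerivAt (fun y ↦ ∑ i ∈ s, c i • f (a * y - b i))
      (a • ∑ i ∈ s, c i • deriv f (a * x - b i)) x := by
  rw [smul_sum]
  refine HasDerivAt.fun_sum fun i hi ↦ ?_
  have hinner : HasDerivAt (fun y ↦ a * y - b i) a x := by
    simpa using ((hasDerivAt_id x).const_mul a).sub_const (b i)
  rw [smul_comm]
  exact ((hf i hi).hasDerivAt.scomp x hinner).fun_const_smul (c i)

end Derivative

lemma deriv_eq_zero_of_eq_zero_of_le_or_le {E : Type*} [NormedAddCommGroup E] [NormedSpace ℝ E]
    {f : ℝ → E} {u v x : ℝ} (hf : DifferentiableAt ℝ f x) (hzero : ∀ y, y ≤ u ∨ v ≤ y → f y = 0)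
    (hx : x ≤ u ∨ v ≤ x) : deriv f x = 0 := by
  rcases hx with hxu | hvx
  · exact deriv_eq_zero_of_eqOn_zero hf (uniqueDiffOn_Iic u x hxu) hxu
      fun y hy ↦ hzero y (.inl hy)
  · exact deriv_eq_zero_of_eqOn_zero hf (uniqueDiffOn_Ici v x hvx) hvx
      fun y hy ↦ hzero y (.inr hy)

lemma sum_smul_sub_eq_sum_sub_smul {G R A : Type*} [AddCommGroup G] [Zero R]
    [AddCommMonoid A] [SMulWithZero R A] {s t : Finset G} {c : G → R} {g : G → A}
    (hc : ∀ k ∉ s, c k = 0) (hg : ∀ k ∉ t, g k = 0) (n : G) :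
    ∑ k ∈ s, c k • g (n - k) = ∑ k ∈ t, c (n - k) • g k :=
  calc
    ∑ k ∈ s, c k • g (n - k) = ∑ᶠ k, c k • g (n - k) :=
      (finsum_eq_sum_of_support_subset _ <| Function.support_subset_iff'.2 fun k hk ↦ by
        rw [hc k hk, zero_smul]).symm
    _ = ∑ᶠ k, c (n - k) • g k := by
      simpa using (finsum_comp_equiv (f := fun k ↦ c k • g (n - k)) (Equiv.subLeft n)).symm
    _ = ∑ k ∈ t, c (n - k) • g k :=
      finsum_eq_sum_of_support_subset _ <| Function.support_subset_iff'.2 fun k hk ↦ by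
        rw [hg k hk, smul_zero]

lemma sum_range_natCast_eq_sum_Ico {A : Type*} [AddCommMonoid A] (f : ℤ → A) (n : ℕ) :
    ∑ k ∈ range n, f k = ∑ k ∈ Ico (0 : ℤ) n, f k := by
  simp [Int.Ico_eq_finset_map]

theorem scaling_function_deriv_integer_eigenvector_general {E R : Type*} [NormedAddCommGroup E]
    [NormedSpace ℝ E] [Semiring R] [Module R E] [SMulCommClass ℝ R E] [ContinuousConstSMul R E]
    {a u v : ℤ} (ha : a ≠ 0) {s : Finset ℤ} {c : ℤ → R} (hc : ∀ k ∉ s, c k = 0) {φ : ℝ → E}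
    (hdiff : ∀ k : ℤ, DifferentiableAt ℝ φ k)
    (hsupp : ∀ x : ℝ, x ≤ u ∨ v ≤ x → φ x = 0)
    (hrefine : ∀ x : ℝ, φ x = ∑ k ∈ s, c k • φ (a * x - k)) (j : ℤ) :
    (a : ℝ)⁻¹ • deriv φ j = ∑ k ∈ Ioo u v, c (a * j - k) • deriv φ k := by
  have hderiv_zero : ∀ k ∉ Ioo u v, deriv φ (k : ℝ) = 0 := fun k hk ↦ by
    have hk_outside : k ≤ u ∨ v ≤ k := by rw [mem_Ioo] at hk; omega
    exact deriv_eq_zero_of_eq_zero_of_le_or_le (hdiff k) hsupp (mod_cast hk_outside)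
  have hderiv : deriv φ j = (a : ℝ) • ∑ k ∈ s, c k • deriv φ (a * j - k) := by
    have hsum := hasDerivAt_sum_smul_comp_mul_sub (f := φ) (a := a) (x := j) (s := s) c
      (fun k : ℤ ↦ (k : ℝ)) fun k _ ↦ mod_cast hdiff (a * j - k)
    rw [← funext hrefine] at hsum
    exact hsum.deriv
  rw [hderiv, inv_smul_smul₀ (mod_cast ha)]
  simpa using sum_smul_sub_eq_sum_sub_smul (g := fun k : ℤ ↦ deriv φ k) hc hderiv_zero (a * j)

/-- The vector (φ′(1), …, φ′(2p−2)) is an eigenvector with eigenvalue 1/2 of the matrix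
L_{jk} = c(2j−k). -/
theorem scaling_function_deriv_integer_eigenvector
    (p : ℕ) (hp : 1 ≤ p) (c : ℤ → ℝ)
    (hc : ∀ k : ℤ, (k < 0 ∨ 2*(p:ℤ) - 1 < k) → c k = 0)
    (φ : ℝ → ℝ) (hdiff : Differentiable ℝ φ)
    (hsupp : ∀ x : ℝ, (x ≤ 0 ∨ 2*(p:ℝ) - 1 ≤ x) → φ x = 0)
    (htwoscale : ∀ x : ℝ, φ x = ∑ k ∈ Finset.range (2*p), c (k : ℤ) * φ (2*x - (k : ℝ))) :
    ∀ j : ℤ, 1 ≤ j → j ≤ 2*(p:ℤ) - 2 →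
      (1/2) * deriv φ (j : ℝ) =
        ∑ k ∈ Finset.Icc (1:ℤ) (2*(p:ℤ) - 2), c (2*j - k) * deriv φ (k : ℝ) := by
  intro j _ _
  have hrefine (x : ℝ) : φ x = ∑ k ∈ Ico (0 : ℤ) (2 * p : ℕ), c k • φ ((2 : ℤ) * x - k) := by
    simpa only [← sum_range_natCast_eq_sum_Ico, smul_eq_mul, Int.cast_ofNat, Int.cast_natCast]
      using htwoscale x
  have hfilter : ∀ k ∉ Ico (0 : ℤ) (2 * p : ℕ), c k = 0 := fun k hk ↦ hc k <| by
    rw [mem_Ico] at hk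
    omega
  simpa [← Icc_add_one_sub_one_eq_Ioo, sub_sub] using
    scaling_function_deriv_integer_eigenvector_general (u := 0) (v := 2 * p - 1) two_ne_zero
      hfilter (fun k ↦ hdiff k) (mod_cast hsupp) hrefine j
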